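/- Let $n \ge 1$, let $a, b$ be nonzero $n \times n$ complex matrices, let $p > 1$ and $q > 1$ satisfy $1/p + 1/q = 1$. Then $\|a b^*\|_1 = \|a\|_p \, \|b\|_q$ if and only if there exists a real number $\lambda \ge 0$ such that $|a|^p = \lambda \, |b|^q$ (as matrices, i.e. $|a|^p$ equals the scalar multiple $\lambda \cdot |b|^q$). -/

import Mathlib

open Matrix
open scoped ComplexOrder

open scoped MatrixOrder in
/-- `matAbs x` is `|x|`, the unique positive semidefinite square root of `xᴴ * x`. -/
noncomputable def matAbs {n : ℕ} (x : Matrix (Fin n) (Fin n) ℂ) : Matrix (Fin n) (Fin n) ℂ :=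
  CFC.sqrt (xᴴ * x)

/-- `matRpow x r` is the real power `x ^ r` defined via the continuous functional calculus. -/
noncomputable def matRpow {n : ℕ} (x : Matrix (Fin n) (Fin n) ℂ) (r : ℝ) :
    Matrix (Fin n) (Fin n) ℂ :=
  cfc (fun t : ℝ => t ^ r) x

/-- The Schatten `r`-norm `(Tr(|x|^r))^(1/r)`. -/
noncomputable def schatten {n : ℕ} (r : ℝ) (x : Matrix (Fin n) (Fin n) ℂ) : ℝ :=
  (Matrix.trace (matRpow (matAbs x) r)).re ^ (1 / r)


theorem clm_polar {E : Type*} [NormedAddCommGroup E] [InnerProductSpace ℂ E] [FiniteDimensional ℂ E]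
    [CompleteSpace E]
    (x y : E →L[ℂ] E) (h : star x * x = star y * y) : ∃ U : E →L[ℂ] E, star U * U = 1 ∧ x = U * y := by
  have hn : ∀ v, ‖x v‖ = ‖y v‖ := by
    intro v
    have h1 : ‖x v‖ ^ 2 = ‖y v‖ ^ 2 := by
      rw [ContinuousLinearMap.apply_norm_sq_eq_inner_adjoint_left,
        ContinuousLinearMap.apply_norm_sq_eq_inner_adjoint_left]
      have := congrArg (fun z : E →L[ℂ] E => z v) h
      simp only [ContinuousLinearMap.star_eq_adjoint] at this
      simp only [mul_apply_eq_comp] at this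
      simp [this]
    exact (sq_eq_sq₀ (norm_nonneg _) (norm_nonneg _)).1 h1
  obtain ⟨s, hs⟩ := LinearMap.exists_rightInverse_of_surjective (y : E →ₗ[ℂ] E).rangeRestrict
    (LinearMap.range_rangeRestrict _)
  have hs' : ∀ w, y (s w) = w := by
    intro w
    have := congrArg Subtype.val (LinearMap.congr_fun hs w)
    simpa using this
  let L : (LinearMap.range (y : E →ₗ[ℂ] E)) →ₗᵢ[ℂ] E :=
    { toLinearMap := (x : E →ₗ[ℂ] E).comp s
      norm_map' := by
        intro w
        simp only [LinearMap.comp_apply, ContinuousLinearMap.coe_coe]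
        rw [hn, hs']; rfl }
  refine ⟨L.extend.toContinuousLinearMap, ?_, ?_⟩
  · rw [ContinuousLinearMap.star_eq_adjoint]
    exact (ContinuousLinearMap.norm_map_iff_adjoint_comp_self _).1 (fun v => L.extend.norm_map v)
  · ext v
    have h1 := L.extend_apply ⟨y v, LinearMap.mem_range_self (y : E →ₗ[ℂ] E) v⟩
    simp only [mul_apply_eq_comp, LinearIsometry.coe_toContinuousLinearMap]
    rw [h1]
    show x v = x (s _)
    rw [← sub_eq_zero, ← map_sub, ← norm_eq_zero, hn, map_sub, hs', sub_self, norm_zero]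

theorem mat_polar {n : ℕ} (x y : Matrix (Fin n) (Fin n) ℂ) (h : xᴴ * x = yᴴ * y) :
    ∃ U : Matrix (Fin n) (Fin n) ℂ, Uᴴ * U = 1 ∧ x = U * y := by
  let T := Matrix.toEuclideanCLM (n := Fin n) (𝕜 := ℂ)
  obtain ⟨U, h1, h2⟩ := clm_polar (T x) (T y) (by
    rw [← map_star, ← map_star, ← map_mul, ← map_mul]
    exact congrArg T h)
  refine ⟨T.symm U, ?_, ?_⟩
  · apply EquivLike.injective T
    rw [map_mul, ← Matrix.star_eq_conjTranspose, map_star, T.apply_symm_apply, h1, map_one]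
  · apply EquivLike.injective T
    rw [map_mul, T.apply_symm_apply, h2]

theorem young_eq {p q x y : ℝ} (hp : 1 < p) (hq : 1 < q) (hpq : 1 / p + 1 / q = 1)
    (hx : 0 ≤ x) (hy : 0 ≤ y) (h : x * y = x ^ p / p + y ^ q / q) : x ^ p = y ^ q := by
  have h0 : p ≠ 0 := by positivity
  have h1 : q ≠ 0 := by positivity
  have := (Real.geom_mean_eq_arith_mean_weighted_iff_of_pos Finset.univ ![1 / p, 1 / q]
    ![x ^ p, y ^ q] (by simp [Fin.forall_fin_two]; constructor <;> linarith) (by simpa using hpq)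
    (by simp [Fin.forall_fin_two]; constructor <;> positivity)).1 (by
      simp only [Fin.prod_univ_two, Fin.sum_univ_two, Matrix.cons_val_zero, Matrix.cons_val_one]
      rw [← Real.rpow_mul hx, ← Real.rpow_mul hy]
      rw [mul_one_div_cancel h0, mul_one_div_cancel h1, Real.rpow_one, Real.rpow_one, h]
      ring)
  simpa using this 0 (Finset.mem_univ _) 1 (Finset.mem_univ _)

theorem young_le {p q x y : ℝ} (hp : 1 < p) (_hq : 1 < q) (hpq : 1 / p + 1 / q = 1)
    (hx : 0 ≤ x) (hy : 0 ≤ y) : x * y ≤ x ^ p / p + y ^ q / q :=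
  Real.young_inequality_of_nonneg hx hy
    (Real.holderConjugate_iff.2 ⟨hp, by simpa using hpq⟩)

theorem unit_row {n : ℕ} {M : Matrix (Fin n) (Fin n) ℂ} (h : M * Mᴴ = 1) (i : Fin n) :
    ∑ j, ‖M i j‖ ^ 2 = 1 := by
  have := congrFun (congrFun h i) i
  rw [Matrix.mul_apply] at this
  simp only [Matrix.conjTranspose_apply, Complex.star_def, Complex.mul_conj,
    Complex.normSq_eq_norm_sq, Matrix.one_apply_eq] at this
  exact_mod_cast this

theorem unit_col {n : ℕ} {M : Matrix (Fin n) (Fin n) ℂ} (h : Mᴴ * M = 1) (j : Fin n) :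
    ∑ i, ‖M i j‖ ^ 2 = 1 := by
  have := unit_row (M := Mᴴ) (by simpa using h) j
  simpa using this

/-- core combinatorial equality -/
theorem core {n : ℕ} {p q : ℝ} (hp : 1 < p) (hq : 1 < q) (hpq : 1 / p + 1 / q = 1)
    (M N : Matrix (Fin n) (Fin n) ℂ) (hM : Mᴴ * M = 1) (hN : Nᴴ * N = 1)
    (α β : Fin n → ℝ) (hα : ∀ i, 0 ≤ α i) (hβ : ∀ i, 0 ≤ β i)
    (sα : ∑ i, α i ^ p = 1) (sβ : ∑ i, β i ^ q = 1)
    (h : (∑ i, ∑ j, N j i * α i * M i j * β j).re = 1) (i j : Fin n) (hij : M i j ≠ 0) :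
    α i ^ p = β j ^ q := by
  have hM' := mul_eq_one_comm.1 hM
  have hN' := mul_eq_one_comm.1 hN
  let s : Fin n → Fin n → ℝ := fun i j => (‖N j i‖ ^ 2 + ‖M i j‖ ^ 2) / 2
  have hs0 : ∀ i j, 0 ≤ s i j := fun i j => by positivity
  have hr : ∀ i, ∑ j, s i j = 1 := by
    intro i
    simp only [s]
    rw [← Finset.sum_div, Finset.sum_add_distrib, unit_row hM', unit_col hN]; norm_num
  have hc : ∀ j, ∑ i, s i j = 1 := by
    intro j
    simp only [s]
    rw [← Finset.sum_div, Finset.sum_add_distrib, unit_row hN', unit_col hM]; norm_num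
  have key : ∀ i j, (N j i * α i * M i j * β j).re ≤ s i j * (α i * β j) := by
    intro i j
    refine (Complex.re_le_norm _).trans ?_
    simp only [norm_mul, Complex.norm_real, Real.norm_of_nonneg (hα i), Real.norm_of_nonneg (hβ j)]
    have : ‖N j i‖ * ‖M i j‖ ≤ s i j := by
      simp only [s]; nlinarith [sq_nonneg (‖N j i‖ - ‖M i j‖)]
    nlinarith [mul_le_mul_of_nonneg_right this (mul_nonneg (hα i) (hβ j))]
  have key2 : ∀ i j, s i j * (α i * β j) ≤ s i j * (α i ^ p / p + β j ^ q / q) := fun i j =>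
    mul_le_mul_of_nonneg_left (young_le hp hq hpq (hα i) (hβ j)) (hs0 i j)
  have tot : ∑ i, ∑ j, s i j * (α i ^ p / p + β j ^ q / q) = 1 := by
    simp only [mul_add, Finset.sum_add_distrib]
    rw [Finset.sum_comm (f := fun i j => s i j * (β j ^ q / q))]
    simp only [← Finset.sum_mul, hr, hc, one_mul]
    rw [← Finset.sum_div, ← Finset.sum_div, sα, sβ, hpq]
  have tot1 : ∑ i, ∑ j, (N j i * α i * M i j * β j).re = 1 := by
    rw [← h]; simp only [Complex.re_sum]
  have e : ∑ x : Fin n × Fin n, (N x.2 x.1 * α x.1 * M x.1 x.2 * β x.2).re =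
      ∑ x : Fin n × Fin n, s x.1 x.2 * (α x.1 ^ p / p + β x.2 ^ q / q) := by
    rw [Fintype.sum_prod_type, Fintype.sum_prod_type, tot, tot1]
  have e2 := (Finset.sum_eq_sum_iff_of_le (fun x _ => (key x.1 x.2).trans (key2 x.1 x.2))).1 e (i, j)
    (Finset.mem_univ _)
  have e3 := le_antisymm (key2 i j) (e2.symm.le.trans (key i j))
  have hs : s i j ≠ 0 := by
    have := norm_pos_iff.2 hij
    positivity
  exact young_eq hp hq hpq (hα i) (hβ j) (mul_left_cancel₀ hs e3)

open scoped MatrixOrder in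
theorem matAbs_psd {n : ℕ} (x : Matrix (Fin n) (Fin n) ℂ) : (matAbs x).PosSemidef :=
  Matrix.nonneg_iff_posSemidef.1 (CFC.sqrt_nonneg _)

open scoped MatrixOrder in
theorem matAbs_sq {n : ℕ} (x : Matrix (Fin n) (Fin n) ℂ) : matAbs x * matAbs x = xᴴ * x :=
  CFC.sqrt_mul_sqrt_self _ (Matrix.nonneg_iff_posSemidef.2 (Matrix.posSemidef_conjTranspose_mul_self x))

open scoped MatrixOrder in
theorem matAbs_unique {n : ℕ} (x y : Matrix (Fin n) (Fin n) ℂ) (hy : y.PosSemidef)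
    (h : y * y = xᴴ * x) : matAbs x = y :=
  CFC.sqrt_unique h (Matrix.nonneg_iff_posSemidef.2 hy)

theorem matAbs_polar {n : ℕ} (x : Matrix (Fin n) (Fin n) ℂ) :
    ∃ U : Matrix (Fin n) (Fin n) ℂ, Uᴴ * U = 1 ∧ x = U * matAbs x :=
  mat_polar x (matAbs x) (by rw [(matAbs_psd x).1.eq, matAbs_sq])

theorem matAbs_ne {n : ℕ} {x : Matrix (Fin n) (Fin n) ℂ} (hx : x ≠ 0) : matAbs x ≠ 0 := by
  intro h
  obtain ⟨U, -, h2⟩ := matAbs_polar x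
  rw [h, mul_zero] at h2
  exact hx h2

theorem spec {n : ℕ} {A : Matrix (Fin n) (Fin n) ℂ} (hA : A.PosSemidef) :
    ∃ (P : Matrix (Fin n) (Fin n) ℂ) (α : Fin n → ℝ), Pᴴ * P = 1 ∧ (∀ i, 0 ≤ α i) ∧
      A = P * diagonal (fun i => (α i : ℂ)) * Pᴴ ∧
      ∀ r, matRpow A r = P * diagonal (fun i => ((α i ^ r : ℝ) : ℂ)) * Pᴴ := by
  refine ⟨hA.1.eigenvectorUnitary, hA.1.eigenvalues, ?_, hA.eigenvalues_nonneg, ?_, ?_⟩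
  · exact Unitary.coe_star_mul_self hA.1.eigenvectorUnitary
  · conv_lhs => rw [hA.1.spectral_theorem, Unitary.conjStarAlgAut_apply]
    rfl
  · intro r
    rw [matRpow, hA.1.cfc_eq, Matrix.IsHermitian.cfc, Unitary.conjStarAlgAut_apply]
    rfl

theorem trace_conj {n : ℕ} {P D : Matrix (Fin n) (Fin n) ℂ} (h : Pᴴ * P = 1) :
    trace (P * D * Pᴴ) = trace D := by
  rw [Matrix.trace_mul_comm, ← mul_assoc, h, one_mul]

theorem trace_diag {n : ℕ} (α : Fin n → ℝ) :
    (trace (diagonal (fun i => (α i : ℂ)))).re = ∑ i, α i := by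
  simp [Matrix.trace_diagonal]

theorem cont {n : ℕ} (f : ℝ → ℝ) (A : Matrix (Fin n) (Fin n) ℂ) : ContinuousOn f (spectrum ℝ A) :=
  A.finite_real_spectrum.continuousOn f

theorem schatten_one {n : ℕ} (x : Matrix (Fin n) (Fin n) ℂ) :
    schatten 1 x = (trace (matAbs x)).re := by
  have : matRpow (matAbs x) 1 = matAbs x := by
    rw [matRpow]
    simp only [Real.rpow_one]
    exact cfc_id' ℝ (matAbs x) (matAbs_psd x).1
  rw [schatten, this]; simp

open scoped MatrixOrder in
theorem spec_nonneg {n : ℕ} {A : Matrix (Fin n) (Fin n) ℂ} (hA : A.PosSemidef) {t : ℝ}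
    (ht : t ∈ spectrum ℝ A) : 0 ≤ t :=
  spectrum_nonneg_of_nonneg (Matrix.nonneg_iff_posSemidef.2 hA) ht

theorem rpow_inv {n : ℕ} {A : Matrix (Fin n) (Fin n) ℂ} (hA : A.PosSemidef) {p : ℝ} (hp : p ≠ 0) :
    matRpow (matRpow A p) (1 / p) = A := by
  have hs : IsSelfAdjoint A := hA.1
  rw [matRpow, matRpow, ← cfc_comp _ _ A hs
    ((A.finite_real_spectrum.image _).continuousOn _) (cont _ A)]
  conv_rhs => rw [← cfc_id' ℝ A hs]
  apply cfc_congr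
  intro t ht
  have := spec_nonneg hA ht
  simp [← Real.rpow_mul this, hp]

theorem rpow_smul {n : ℕ} {A : Matrix (Fin n) (Fin n) ℂ} (hA : A.PosSemidef) {p q l : ℝ}
    (hp : 1 < p) (hq : 1 < q) (hpq : 1 / p + 1 / q = 1) (hl : 0 ≤ l) :
    matRpow (l • matRpow A q) (1 / p) * A = (l ^ (1 / p)) • matRpow A q := by
  have hs : IsSelfAdjoint A := hA.1
  rw [matRpow, matRpow, ← cfc_smul _ _ A (cont _ A), ← cfc_smul _ _ A (cont _ A),
    ← cfc_comp _ _ A hs ((A.finite_real_spectrum.image _).continuousOn _) (cont _ A)]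
  conv_lhs => enter [2]; rw [← cfc_id' ℝ A hs]
  rw [← cfc_mul _ _ A (cont _ A) (cont _ A)]
  apply cfc_congr
  intro t ht
  have ht := spec_nonneg hA ht
  have e : q * (1 / p) + 1 = q := by
    have : 1 / p = 1 - 1 / q := by linarith
    rw [this]; field_simp; ring
  simp only [Function.comp_apply, smul_eq_mul]
  rw [Real.mul_rpow hl (by positivity), ← Real.rpow_mul ht, mul_assoc]
  congr 1
  conv_rhs => rw [← e, Real.rpow_add_one' ht (by rw [e]; positivity)]

theorem trace_pos {n : ℕ} {A : Matrix (Fin n) (Fin n) ℂ} (α : Fin n → ℝ)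
    (P : Matrix (Fin n) (Fin n) ℂ) (h0 : ∀ i, 0 ≤ α i)
    (h : A = P * diagonal (fun i => (α i : ℂ)) * Pᴴ) (hA : A ≠ 0) (r : ℝ) : 0 < ∑ i, α i ^ r := by
  have : ∃ i, α i ≠ 0 := by
    by_contra! hc
    apply hA
    rw [h]; simp [hc]
  obtain ⟨i, hi⟩ := this
  refine Finset.sum_pos' (fun i _ => Real.rpow_nonneg (h0 i) r) ⟨i, Finset.mem_univ _, ?_⟩
  exact Real.rpow_pos_of_pos (lt_of_le_of_ne (h0 i) hi.symm) r

theorem holder_equality_iff_proportional {n : ℕ} (hn : 1 ≤ n)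
    (a b : Matrix (Fin n) (Fin n) ℂ) (ha : a ≠ 0) (hb : b ≠ 0) (p q : ℝ)
    (hp : 1 < p) (hq : 1 < q) (hpq : 1 / p + 1 / q = 1) :
    schatten 1 (a * bᴴ) = schatten p a * schatten q b ↔
      ∃ lam : ℝ, 0 ≤ lam ∧ matRpow (matAbs a) p = lam • matRpow (matAbs b) q := by
  have hA := matAbs_psd a
  have hB := matAbs_psd b
  obtain ⟨U, hU, haU⟩ := matAbs_polar a
  obtain ⟨V, hV, hbV⟩ := matAbs_polar b
  obtain ⟨P, α, hP, hα, eA, rA⟩ := spec hA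
  obtain ⟨Q, β, hQ, hβ, eB, rB⟩ := spec hB
  have hS := trace_pos α P hα eA (matAbs_ne ha) p
  have hT := trace_pos β Q hβ eB (matAbs_ne hb) q
  have sA : schatten p a = (∑ i, α i ^ p) ^ (1 / p) := by
    rw [schatten, rA, trace_conj hP, trace_diag]
  have sB : schatten q b = (∑ i, β i ^ q) ^ (1 / q) := by
    rw [schatten, rB, trace_conj hQ, trace_diag]
  have tB : (trace (matRpow (matAbs b) q)).re = ∑ i, β i ^ q := by
    rw [rB, trace_conj hQ, trace_diag]
  have tA : (trace (matRpow (matAbs a) p)).re = ∑ i, α i ^ p := by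
    rw [rA, trace_conj hP, trace_diag]
  have eab : a * bᴴ = U * (matAbs a * matAbs b) * Vᴴ := by
    conv_lhs => rw [haU, hbV, conjTranspose_mul, hB.1.eq]
    simp only [mul_assoc]
  rw [schatten_one, sA, sB]
  set S := ∑ i, α i ^ p with hSdef
  set T := ∑ i, β i ^ q with hTdef
  have hp0 : p ≠ 0 := by positivity
  have hq0 : q ≠ 0 := by positivity
  constructor
  · intro h
    obtain ⟨W, hW, hxW⟩ := matAbs_polar (a * bᴴ)
    have e1 : matAbs (a * bᴴ) = Wᴴ * (a * bᴴ) := by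
      conv_rhs => rw [hxW, ← mul_assoc, hW, one_mul]
    set M := Pᴴ * Q with hMdef
    set N := Qᴴ * (Vᴴ * Wᴴ * U) * P with hNdef
    have hP' := mul_eq_one_comm.1 hP
    have hQ' := mul_eq_one_comm.1 hQ
    have hM : Mᴴ * M = 1 := by
      rw [hMdef, conjTranspose_mul, conjTranspose_conjTranspose]
      calc _ = Qᴴ * (P * Pᴴ) * Q := by simp only [mul_assoc]
        _ = 1 := by rw [hP', mul_one, hQ]
    have hN : Nᴴ * N = 1 := by
      have hV' := mul_eq_one_comm.1 hV
      have hW' := mul_eq_one_comm.1 hW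
      rw [hNdef]
      simp only [conjTranspose_mul, conjTranspose_conjTranspose]
      calc _ = Pᴴ * (Uᴴ * (W * (V * (Q * Qᴴ) * Vᴴ) * Wᴴ) * U) * P := by simp only [mul_assoc]
        _ = 1 := by rw [hQ', mul_one, hV', mul_one, hW', mul_one, hU, mul_one, hP]
    have e2 : trace (matAbs (a * bᴴ)) = ∑ i, ∑ j, N j i * α i * M i j * β j := by
      have : trace (matAbs (a * bᴴ)) =
          trace (M * diagonal (fun i => (β i : ℂ)) * (N * diagonal (fun i => (α i : ℂ)))) := by
        rw [e1, eab, eA, eB, hMdef, hNdef]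
        rw [← Matrix.trace_mul_comm (N * diagonal (fun i => (α i : ℂ))), hNdef]
        calc _ = trace ((Wᴴ * U * (P * diagonal (fun i => (α i : ℂ)) * Pᴴ *
              (Q * diagonal (fun i => (β i : ℂ))))) * (Qᴴ * Vᴴ)) := by simp only [mul_assoc]
          _ = _ := by rw [Matrix.trace_mul_comm]; simp only [mul_assoc]
      rw [this]
      simp only [trace, diag_apply]
      refine Finset.sum_congr rfl fun i _ => ?_
      rw [Matrix.mul_apply]
      refine Finset.sum_congr rfl fun j _ => ?_
      rw [Matrix.mul_diagonal, Matrix.mul_diagonal]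
      ring
    have hs : 0 < S ^ (1 / p) := Real.rpow_pos_of_pos hS _
    have ht : 0 < T ^ (1 / q) := Real.rpow_pos_of_pos hT _
    have hsp : (S ^ (1 / p)) ^ p = S := by
      rw [← Real.rpow_mul hS.le, one_div_mul_cancel hp0, Real.rpow_one]
    have htq : (T ^ (1 / q)) ^ q = T := by
      rw [← Real.rpow_mul hT.le, one_div_mul_cancel hq0, Real.rpow_one]
    have ediv : ∀ i, (α i / S ^ (1 / p)) ^ p = α i ^ p / S := fun i => by
      rw [Real.div_rpow (hα i) hs.le, hsp]
    have fdiv : ∀ i, (β i / T ^ (1 / q)) ^ q = β i ^ q / T := fun i => by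
      rw [Real.div_rpow (hβ i) ht.le, htq]
    have hc := core hp hq hpq M N hM hN (fun i => α i / S ^ (1 / p)) (fun i => β i / T ^ (1 / q))
      (fun i => div_nonneg (hα i) hs.le) (fun i => div_nonneg (hβ i) ht.le)
      (by simp only [ediv]; rw [← Finset.sum_div, ← hSdef, div_self hS.ne'])
      (by simp only [fdiv]; rw [← Finset.sum_div, ← hTdef, div_self hT.ne'])
      (by
        have e3 : ∑ i, ∑ j, N j i * ((α i / S ^ (1 / p) : ℝ) : ℂ) * M i j *
            ((β j / T ^ (1 / q) : ℝ) : ℂ) =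
            (((S ^ (1 / p) * T ^ (1 / q))⁻¹ : ℝ) : ℂ) * trace (matAbs (a * bᴴ)) := by
          rw [e2, Finset.mul_sum]
          refine Finset.sum_congr rfl fun i _ => ?_
          rw [Finset.mul_sum]
          refine Finset.sum_congr rfl fun j _ => ?_
          push_cast
          ring
        rw [e3, Complex.re_ofReal_mul, h]
        exact inv_mul_cancel₀ (mul_pos hs ht).ne')
    refine ⟨S / T, by positivity, ?_⟩
    have hD : diagonal (fun i => ((α i ^ p : ℝ) : ℂ)) * M =
        M * ((S / T) • diagonal (fun i => ((β i ^ q : ℝ) : ℂ))) := by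
      ext i j
      rw [Matrix.mul_smul, Matrix.smul_apply, Matrix.mul_diagonal, Matrix.diagonal_mul]
      by_cases hij : M i j = 0
      · simp [hij]
      · have := hc i j hij
        simp only [ediv, fdiv] at this
        have h4 : α i ^ p = S / T * β j ^ q := by
          field_simp at this ⊢
          linarith
        rw [h4, Complex.real_smul]
        push_cast
        ring
    rw [rA, rB]
    calc P * diagonal (fun i => ((α i ^ p : ℝ) : ℂ)) * Pᴴ
        = P * (diagonal (fun i => ((α i ^ p : ℝ) : ℂ)) * M) * Qᴴ := by
          rw [hMdef]
          calc _ = P * diagonal (fun i => ((α i ^ p : ℝ) : ℂ)) * Pᴴ * (Q * Qᴴ) := by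
                rw [hQ', mul_one]
            _ = _ := by simp only [mul_assoc]
      _ = (P * Pᴴ) * (Q * ((S / T) • diagonal (fun i => ((β i ^ q : ℝ) : ℂ)))) * Qᴴ := by
          rw [hD, hMdef]; simp only [mul_assoc]
      _ = _ := by rw [hP', one_mul, Matrix.mul_smul, Matrix.smul_mul]
  · rintro ⟨l, hl, h⟩
    have eAB : matAbs a * matAbs b = (l ^ (1 / p)) • matRpow (matAbs b) q := by
      rw [← rpow_smul hB hp hq hpq hl, ← h, rpow_inv hA hp0]
    set C := matAbs a * matAbs b with hC
    have hl' : 0 ≤ l ^ (1 / p) := Real.rpow_nonneg hl _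
    have hCpsd : C.PosSemidef := by
      rw [eAB, rB]
      refine Matrix.PosSemidef.smul ?_ hl'
      refine Matrix.PosSemidef.mul_mul_conjTranspose_same (Matrix.PosSemidef.diagonal ?_) Q
      intro i
      simpa using Complex.zero_le_real.2 (Real.rpow_nonneg (hβ i) q)
    have e1 : matAbs (a * bᴴ) = V * C * Vᴴ := by
      apply matAbs_unique _ _ (hCpsd.mul_mul_conjTranspose_same V)
      rw [eab]
      simp only [conjTranspose_mul, conjTranspose_conjTranspose, hCpsd.1.eq]
      calc _ = V * C * (Vᴴ * V) * (C * Vᴴ) := by simp only [mul_assoc]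
        _ = V * C * (Uᴴ * U) * (C * Vᴴ) := by rw [hU, hV]
        _ = _ := by simp only [mul_assoc]
    rw [e1, trace_conj hV, eAB, Matrix.trace_smul, Complex.smul_re, tB]
    have hST : S = l * T := by
      rw [← tA, h, Matrix.trace_smul, Complex.smul_re, tB]; rfl
    rw [hST, Real.mul_rpow hl hT.le, mul_assoc, ← Real.rpow_add hT, hpq, Real.rpow_one]
    rfl
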